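/- Let n ≥ 2 and r ≥ 1 be integers. There exists M such that for every real m ≥ M: the sets A := {(u,t) ∈ ℝ × ℝ_{>0} : (2 − m)·(u² + t²) + 2·√(2m−2)·(2r−1)·u − 4·(2r−1)·(r−1) = 0} and B := {(u,t) ∈ ℝ × ℝ_{>0} : (r² − r + 2 − n − m)·(u² + t²) − 2·√(2m−2)·u + 4·(r−1) = 0} are disjoint; every point of A has u > 0, while the circle containing B has center with negative u-coordinate; and neither of the two closed disks bounded by the circles containing A and B contains the other. -/

import Mathlib

/-- The only possible wall of instability of the spherical line bundle `O(2(r−1)f)` on the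
slice `P_H` (caused by `O(2(r−1)f − c)`, by Arcara–Miles): points `(u, t)` with `t > 0` and
`(2 − m)(u² + t²) + 2√(2m−2)(2r−1)u − 4(2r−1)(r−1) = 0`. -/
noncomputable def arcaraSet (m : ℝ) (r : ℤ) : Set (ℝ × ℝ) :=
  {p | 0 < p.2 ∧
    (2 - m) * (p.1 ^ 2 + p.2 ^ 2)
      + 2 * Real.sqrt (2 * m - 2) * (2 * (r : ℝ) - 1) * p.1
      - 4 * (2 * (r : ℝ) - 1) * ((r : ℝ) - 1) = 0}

/-- Center of the circle containing `arcaraSet m r`. -/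
noncomputable def arcaraCenter (m : ℝ) (r : ℤ) : ℝ :=
  Real.sqrt (2 * m - 2) * (2 * (r : ℝ) - 1) / (m - 2)

/-- Squared radius of the circle containing `arcaraSet m r`. -/
noncomputable def arcaraRadiusSq (m : ℝ) (r : ℤ) : ℝ :=
  (arcaraCenter m r) ^ 2 - 4 * (2 * (r : ℝ) - 1) * ((r : ℝ) - 1) / (m - 2)

/-- The wall `W_r` of the O'Grady vector `v_r` caused by `s_{r−1}` on the slice `P_H`. -/
noncomputable def wallSet (n : ℤ) (m : ℝ) (r : ℤ) : Set (ℝ × ℝ) :=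
  {p | 0 < p.2 ∧
    ((r : ℝ) ^ 2 - (r : ℝ) + 2 - (n : ℝ) - m) * (p.1 ^ 2 + p.2 ^ 2)
      - 2 * Real.sqrt (2 * m - 2) * p.1 + 4 * ((r : ℝ) - 1) = 0}

/-- Center of the circle containing `wallSet n m r`. -/
noncomputable def wallCenter (n : ℤ) (m : ℝ) (r : ℤ) : ℝ :=
  Real.sqrt (2 * m - 2) / ((r : ℝ) ^ 2 - (r : ℝ) + 2 - (n : ℝ) - m)

/-- Squared radius of the circle containing `wallSet n m r`. -/
noncomputable def wallRadiusSq (n : ℤ) (m : ℝ) (r : ℤ) : ℝ :=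
  (wallCenter n m r) ^ 2
    - 4 * ((r : ℝ) - 1) / ((r : ℝ) ^ 2 - (r : ℝ) + 2 - (n : ℝ) - m)

/-!
Put `s = √(2m−2)` and `w = 4(r−1)`. Both walls lie on circles of the form
`u² + t² = l * (2 * s * u − w)`, with `l = (2r−1)/(m−2) > 0` for the Arcara–Miles wall and
`l = 1/(r² − r + 2 − n − m) < 0` for `W_r`. Hence the two closed disks lie on opposite sides of
the common radical axis `2 * s * u = w`, and can meet at most in the origin, which has `t = 0`.
Each disk contains its own nonzero center, so neither contains the other.
-/

section CoaxalPencil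

variable {s w l l' : ℝ} {p : ℝ × ℝ}

/-- The closed disk bounded by the circle with parameter `l` in the coaxal pencil spanned by the
point circle at the origin (`l = 0`) and the radical axis `2 * s * u = w` (`l = ∞`).
It is empty when the squared radius `(l * s) ^ 2 - l * w` is negative. -/
def pencilDisk (s w l : ℝ) : Set (ℝ × ℝ) :=
  {p | p.1 ^ 2 + p.2 ^ 2 ≤ l * (2 * s * p.1 - w)}

lemma pencilDisk_eq_setOf_center_radius (s w l : ℝ) :
    pencilDisk s w l = {p | (p.1 - l * s) ^ 2 + p.2 ^ 2 ≤ (l * s) ^ 2 - l * w} := by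
  ext p
  simp only [pencilDisk, Set.mem_ofPred_eq]
  constructor <;> intro h <;> linarith

lemma center_mem_pencilDisk (hrad : 0 ≤ (l * s) ^ 2 - l * w) :
    (l * s, 0) ∈ pencilDisk s w l := by
  simpa [pencilDisk_eq_setOf_center_radius] using hrad

lemma sq_add_sq_pos_of_ne_zero (hp : p ≠ 0) : 0 < p.1 ^ 2 + p.2 ^ 2 := by
  have hcoord : p.1 ≠ 0 ∨ p.2 ≠ 0 := not_and_or.mp fun h => hp (Prod.ext h.1 h.2)
  rcases hcoord with h₁ | h₂ <;> positivity

lemma pencilDisk_inter_subset_zero (hll' : l * l' ≤ 0) :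
    pencilDisk s w l ∩ pencilDisk s w l' ⊆ {0} := by
  rintro p ⟨hl, hl'⟩
  by_contra hp
  have hpos := sq_add_sq_pos_of_ne_zero hp
  have hprod : 0 < l * l' * (2 * s * p.1 - w) ^ 2 := by
    calc 0 < l * (2 * s * p.1 - w) * (l' * (2 * s * p.1 - w)) :=
          mul_pos (hpos.trans_le hl) (hpos.trans_le hl')
      _ = l * l' * (2 * s * p.1 - w) ^ 2 := by ring
  exact hprod.not_ge (mul_nonpos_of_nonpos_of_nonneg hll' (sq_nonneg _))

lemma pencilDisk_not_subset (hll' : l * l' ≤ 0) (hcenter : l * s ≠ 0)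
    (hrad : 0 ≤ (l * s) ^ 2 - l * w) : ¬ pencilDisk s w l ⊆ pencilDisk s w l' := by
  intro hsub
  have hmem := center_mem_pencilDisk hrad
  have hzero : (l * s, (0 : ℝ)) = 0 := pencilDisk_inter_subset_zero hll' ⟨hmem, hsub hmem⟩
  exact hcenter (congrArg Prod.fst hzero)

lemma fst_pos_of_mem_pencilDisk (hs : 0 ≤ s) (hw : 0 ≤ w) (hl : 0 ≤ l) (hp : p ≠ 0)
    (hmem : p ∈ pencilDisk s w l) : 0 < p.1 := by
  have haxis : 0 < 2 * s * p.1 - w :=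
    pos_of_mul_pos_right ((sq_add_sq_pos_of_ne_zero hp).trans_le hmem) hl
  have hprod : 0 < 2 * s * p.1 := by linarith
  exact pos_of_mul_pos_right hprod (by positivity)

end CoaxalPencil

section Walls

variable {n r : ℤ} {m : ℝ}

/-- The parameter of the Arcara–Miles circle in the pencil with `s = √(2m−2)`, `w = 4(r−1)`. -/
noncomputable def arcaraParam (m : ℝ) (r : ℤ) : ℝ :=
  (2 * (r : ℝ) - 1) / (m - 2)

/-- The parameter of the circle containing `W_r` in the pencil with `s = √(2m−2)`,
`w = 4(r−1)`. -/
noncomputable def wallParam (n : ℤ) (m : ℝ) (r : ℤ) : ℝ :=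
  ((r : ℝ) ^ 2 - r + 2 - n - m)⁻¹

lemma arcaraCenter_eq (m : ℝ) (r : ℤ) :
    arcaraCenter m r = arcaraParam m r * √(2 * m - 2) := by
  unfold arcaraCenter arcaraParam
  ring

lemma arcaraRadiusSq_eq (m : ℝ) (r : ℤ) :
    arcaraRadiusSq m r =
      (arcaraParam m r * √(2 * m - 2)) ^ 2 - arcaraParam m r * (4 * ((r : ℝ) - 1)) := by
  rw [arcaraRadiusSq, arcaraCenter_eq, arcaraParam]
  ring

lemma wallCenter_eq (n : ℤ) (m : ℝ) (r : ℤ) :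
    wallCenter n m r = wallParam n m r * √(2 * m - 2) := by
  unfold wallCenter wallParam
  ring

lemma wallRadiusSq_eq (n : ℤ) (m : ℝ) (r : ℤ) :
    wallRadiusSq n m r =
      (wallParam n m r * √(2 * m - 2)) ^ 2 - wallParam n m r * (4 * ((r : ℝ) - 1)) := by
  rw [wallRadiusSq, wallCenter_eq, wallParam]
  ring

lemma arcaraDisk_eq_pencilDisk (m : ℝ) (r : ℤ) :
    {p : ℝ × ℝ | (p.1 - arcaraCenter m r) ^ 2 + p.2 ^ 2 ≤ arcaraRadiusSq m r} =
      pencilDisk √(2 * m - 2) (4 * ((r : ℝ) - 1)) (arcaraParam m r) := by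
  rw [pencilDisk_eq_setOf_center_radius, arcaraCenter_eq, arcaraRadiusSq_eq]

lemma wallDisk_eq_pencilDisk (n : ℤ) (m : ℝ) (r : ℤ) :
    {p : ℝ × ℝ | (p.1 - wallCenter n m r) ^ 2 + p.2 ^ 2 ≤ wallRadiusSq n m r} =
      pencilDisk √(2 * m - 2) (4 * ((r : ℝ) - 1)) (wallParam n m r) := by
  rw [pencilDisk_eq_setOf_center_radius, wallCenter_eq, wallRadiusSq_eq]

lemma sq_add_sq_eq_of_mem_arcaraSet (hm : m ≠ 2) {p : ℝ × ℝ} (hp : p ∈ arcaraSet m r) :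
    p.1 ^ 2 + p.2 ^ 2 = arcaraParam m r * (2 * √(2 * m - 2) * p.1 - 4 * ((r : ℝ) - 1)) := by
  have hparam : arcaraParam m r * (m - 2) = 2 * r - 1 := div_mul_cancel₀ _ (sub_ne_zero.mpr hm)
  apply mul_left_cancel₀ (sub_ne_zero.mpr hm)
  linear_combination -hp.2 - (2 * √(2 * m - 2) * p.1 - 4 * ((r : ℝ) - 1)) * hparam

lemma sq_add_sq_eq_of_mem_wallSet (hm : (r : ℝ) ^ 2 - r + 2 - n ≠ m) {p : ℝ × ℝ}
    (hp : p ∈ wallSet n m r) :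
    p.1 ^ 2 + p.2 ^ 2 = wallParam n m r * (2 * √(2 * m - 2) * p.1 - 4 * ((r : ℝ) - 1)) := by
  rw [wallParam, eq_inv_mul_iff_mul_eq₀ (sub_ne_zero.mpr hm)]
  linear_combination hp.2

lemma arcaraSet_subset_circle (hm : m ≠ 2) :
    arcaraSet m r ⊆
      {p : ℝ × ℝ | (p.1 - arcaraCenter m r) ^ 2 + p.2 ^ 2 = arcaraRadiusSq m r} := by
  intro p hp
  rw [Set.mem_ofPred_eq, arcaraRadiusSq_eq, arcaraCenter_eq]
  linear_combination sq_add_sq_eq_of_mem_arcaraSet hm hp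

lemma wallSet_subset_circle (hm : (r : ℝ) ^ 2 - r + 2 - n ≠ m) :
    wallSet n m r ⊆
      {p : ℝ × ℝ | (p.1 - wallCenter n m r) ^ 2 + p.2 ^ 2 = wallRadiusSq n m r} := by
  intro p hp
  rw [Set.mem_ofPred_eq, wallRadiusSq_eq, wallCenter_eq]
  linear_combination sq_add_sq_eq_of_mem_wallSet hm hp

lemma arcaraSet_subset_pencilDisk (hm : m ≠ 2) :
    arcaraSet m r ⊆ pencilDisk √(2 * m - 2) (4 * ((r : ℝ) - 1)) (arcaraParam m r) :=
  fun _ hp => (sq_add_sq_eq_of_mem_arcaraSet hm hp).le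

lemma wallSet_subset_pencilDisk (hm : (r : ℝ) ^ 2 - r + 2 - n ≠ m) :
    wallSet n m r ⊆ pencilDisk √(2 * m - 2) (4 * ((r : ℝ) - 1)) (wallParam n m r) :=
  fun _ hp => (sq_add_sq_eq_of_mem_wallSet hm hp).le

lemma ne_zero_of_mem_arcaraSet {p : ℝ × ℝ} (hp : p ∈ arcaraSet m r) : p ≠ 0 := by
  rintro rfl
  exact lt_irrefl _ hp.1

lemma arcaraParam_pos (hr : 1 ≤ r) (hm : 2 < m) : 0 < arcaraParam m r := by
  have hr' : (1 : ℝ) ≤ r := by exact_mod_cast hr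
  exact div_pos (by linarith) (by linarith)

lemma wallParam_neg (hm : (r : ℝ) ^ 2 - r + 2 - n < m) : wallParam n m r < 0 :=
  inv_lt_zero.mpr (sub_neg.mpr hm)

lemma arcaraRadiusSq_nonneg (hr : 1 ≤ r) (hm : 2 < m) : 0 ≤ arcaraRadiusSq m r := by
  have hr' : (1 : ℝ) ≤ r := by exact_mod_cast hr
  have hm' : 0 < m - 2 := sub_pos.mpr hm
  have hsq : √(2 * m - 2) ^ 2 = 2 * m - 2 := Real.sq_sqrt (by linarith)
  have hrad : arcaraRadiusSq m r =
      arcaraParam m r * (2 * (m - 2) + 4 * (r - 1) + 2) / (m - 2) := by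
    rw [arcaraRadiusSq_eq, mul_pow, hsq, arcaraParam]
    field_simp
    ring
  rw [hrad]
  exact div_nonneg (mul_nonneg (arcaraParam_pos hr hm).le (by linarith)) hm'.le

lemma wallRadiusSq_nonneg (hr : 1 ≤ r) (hm : (r : ℝ) ^ 2 - r + 2 - n < m) :
    0 ≤ wallRadiusSq n m r := by
  have hr' : (1 : ℝ) ≤ r := by exact_mod_cast hr
  have hpower : wallParam n m r * (4 * ((r : ℝ) - 1)) ≤ 0 :=
    mul_nonpos_of_nonpos_of_nonneg (wallParam_neg hm).le (by linarith)
  rw [wallRadiusSq_eq]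
  linarith [sq_nonneg (wallParam n m r * √(2 * m - 2))]

end Walls

theorem stmt_8_general (n : ℤ) {r : ℤ} {m : ℝ} (hr : 1 ≤ r) (hm : 2 < m)
    (hmn : (r : ℝ) ^ 2 - r + 2 - n < m) :
    arcaraSet m r ∩ wallSet n m r = ∅ ∧
    (∀ p ∈ arcaraSet m r, 0 < p.1) ∧
    wallCenter n m r < 0 ∧
    arcaraSet m r ⊆
      {p : ℝ × ℝ | (p.1 - arcaraCenter m r) ^ 2 + p.2 ^ 2 = arcaraRadiusSq m r} ∧
    wallSet n m r ⊆
      {p : ℝ × ℝ | (p.1 - wallCenter n m r) ^ 2 + p.2 ^ 2 = wallRadiusSq n m r} ∧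
    ¬ ({p : ℝ × ℝ | (p.1 - arcaraCenter m r) ^ 2 + p.2 ^ 2 ≤ arcaraRadiusSq m r} ⊆
        {p : ℝ × ℝ | (p.1 - wallCenter n m r) ^ 2 + p.2 ^ 2 ≤ wallRadiusSq n m r}) ∧
    ¬ ({p : ℝ × ℝ | (p.1 - wallCenter n m r) ^ 2 + p.2 ^ 2 ≤ wallRadiusSq n m r} ⊆
        {p : ℝ × ℝ | (p.1 - arcaraCenter m r) ^ 2 + p.2 ^ 2 ≤ arcaraRadiusSq m r}) := by
  have hs : 0 < √(2 * m - 2) := Real.sqrt_pos.mpr (by linarith)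
  have hw : 0 ≤ 4 * ((r : ℝ) - 1) := by
    have hr' : (1 : ℝ) ≤ r := by exact_mod_cast hr
    linarith
  have hA := arcaraParam_pos hr hm
  have hB := wallParam_neg hmn
  have hAB : arcaraParam m r * wallParam n m r ≤ 0 := (mul_neg_of_pos_of_neg hA hB).le
  rw [arcaraDisk_eq_pencilDisk, wallDisk_eq_pencilDisk]
  refine ⟨?disjoint, ?fst_pos, ?center_neg, arcaraSet_subset_circle hm.ne',
    wallSet_subset_circle hmn.ne, ?arcara_not_subset, ?wall_not_subset⟩
  case disjoint =>
    refine Set.eq_empty_of_forall_notMem fun p ⟨hpA, hpB⟩ => ne_zero_of_mem_arcaraSet hpA ?_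
    exact pencilDisk_inter_subset_zero hAB
      ⟨arcaraSet_subset_pencilDisk hm.ne' hpA, wallSet_subset_pencilDisk hmn.ne hpB⟩
  case fst_pos =>
    exact fun p hp => fst_pos_of_mem_pencilDisk hs.le hw hA.le (ne_zero_of_mem_arcaraSet hp)
      (arcaraSet_subset_pencilDisk hm.ne' hp)
  case center_neg => exact wallCenter_eq n m r ▸ mul_neg_of_neg_of_pos hB hs
  case arcara_not_subset =>
    exact pencilDisk_not_subset hAB (mul_pos hA hs).ne'
      (arcaraRadiusSq_eq m r ▸ arcaraRadiusSq_nonneg hr hm)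
  case wall_not_subset =>
    exact pencilDisk_not_subset (mul_comm (arcaraParam m r) _ ▸ hAB)
      (mul_neg_of_neg_of_pos hB hs).ne (wallRadiusSq_eq n m r ▸ wallRadiusSq_nonneg hr hmn)

/-- For `n ≥ 2`, `r ≥ 1` there is `M` such that for all real `m ≥ M`: the Arcara–Miles wall `A`
of `O(2(r−1)f)` and the wall `B = W_r` are disjoint; every point of `A` has `u > 0` while the
circle containing `B` has center with negative `u`-coordinate; each set lies on its circle; and
neither of the two closed disks bounded by these circles contains the other. -/
theorem stmt_8 (n r : ℤ) (hn : 2 ≤ n) (hr : 1 ≤ r) :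
    ∃ M : ℝ, ∀ m : ℝ, M ≤ m →
      arcaraSet m r ∩ wallSet n m r = ∅ ∧
      (∀ p ∈ arcaraSet m r, 0 < p.1) ∧
      wallCenter n m r < 0 ∧
      arcaraSet m r ⊆
        {p : ℝ × ℝ | (p.1 - arcaraCenter m r) ^ 2 + p.2 ^ 2 = arcaraRadiusSq m r} ∧
      wallSet n m r ⊆
        {p : ℝ × ℝ | (p.1 - wallCenter n m r) ^ 2 + p.2 ^ 2 = wallRadiusSq n m r} ∧
      ¬ ({p : ℝ × ℝ | (p.1 - arcaraCenter m r) ^ 2 + p.2 ^ 2 ≤ arcaraRadiusSq m r} ⊆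
          {p : ℝ × ℝ | (p.1 - wallCenter n m r) ^ 2 + p.2 ^ 2 ≤ wallRadiusSq n m r}) ∧
      ¬ ({p : ℝ × ℝ | (p.1 - wallCenter n m r) ^ 2 + p.2 ^ 2 ≤ wallRadiusSq n m r} ⊆
          {p : ℝ × ℝ | (p.1 - arcaraCenter m r) ^ 2 + p.2 ^ 2 ≤ arcaraRadiusSq m r}) :=
  ⟨max 3 ((r : ℝ) ^ 2 - r + 3 - n), fun _ hm => stmt_8_general n hr
    (by linarith [le_of_max_le_left hm]) (by linarith [le_of_max_le_right hm])⟩
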